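/- Under the stated hypotheses on G, if n ≥ 8 then the eigenvector x satisfies x_k > x_2. -/

import Mathlib

open Matrix

/-- The signless Laplacian `Q(G) = D(G) + A(G)` of a finite simple graph `G`. -/
noncomputable def signlessLaplacian {V : Type*} [Fintype V] (G : SimpleGraph V) :
    Matrix V V ℝ :=
  letI := Classical.decEq V
  letI : DecidableRel G.Adj := Classical.decRel _
  Matrix.diagonal (fun v => (G.degree v : ℝ)) + G.adjMatrix ℝ

/-- The `Q`-index of `G`: the largest eigenvalue of the signless Laplacian `Q(G)`. -/
noncomputable def qIndex {V : Type*} [Fintype V] (G : SimpleGraph V) : ℝ :=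
  letI := Classical.decEq V
  sSup (spectrum ℝ (signlessLaplacian G))

/-!
Let `Q x = q x` with `x > 0`, so that `(q - d(v)) x_v` is the sum of `x` over the neighbours of `v`;
in particular `q ≥ d(v)`. Suppose that `d(u) < d(v)` and that every neighbour of `u` other than `v`
is a neighbour of `v` or lies in a set `A` of total weight less than `max x_u x_v`. Then
`x_u < x_v`, since `x_v ≤ x_u` would give
`(q - d(u)) x_u ≤ (q - d(v)) x_v + x(A) < (q - d(v) + 1) x_u ≤ (q - d(u)) x_u`.

This comparison gives `x_0 < x_1` with `A = ∅`, then `x_1 < x_k` with `A = {v_0}`, and finally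
`x_2 < x_k` with `A = {v_1}`.
-/

section Eigenvector

variable {V : Type*} [Fintype V] {G : SimpleGraph V} [DecidableRel G.Adj] {x : V → ℝ} {q : ℝ}
  {u v : V} {A : Finset V}

lemma signlessLaplacian_mulVec_apply :
    (signlessLaplacian G *ᵥ x) v = G.degree v * x v + ∑ w ∈ G.neighborFinset v, x w := by
  simp only [signlessLaplacian, add_mulVec, Pi.add_apply, mulVec_diagonal,
    SimpleGraph.adjMatrix_mulVec_apply]
  congr!

lemma sub_degree_mul_eq_sum_neighborFinset (hx : signlessLaplacian G *ᵥ x = q • x) (v : V) :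
    (q - G.degree v) * x v = ∑ w ∈ G.neighborFinset v, x w := by
  have hv := congrFun hx v
  rw [signlessLaplacian_mulVec_apply, Pi.smul_apply, smul_eq_mul] at hv
  linarith

lemma degree_le_of_signlessLaplacian_mulVec_eq (hpos : ∀ w, 0 < x w)
    (hx : signlessLaplacian G *ᵥ x = q • x) (v : V) : (G.degree v : ℝ) ≤ q := by
  have hsum : 0 ≤ (q - G.degree v) * x v :=
    sub_degree_mul_eq_sum_neighborFinset hx v ▸ Finset.sum_nonneg fun w _ ↦ (hpos w).le
  exact sub_nonneg.1 (nonneg_of_mul_nonneg_left hsum (hpos v))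

lemma sum_neighborFinset_le_add_sum (hnonneg : ∀ w, 0 ≤ x w) (hvu : x v ≤ x u)
    (hN : G.neighborSet u ⊆ insert v (G.neighborSet v ∪ A)) :
    ∑ w ∈ G.neighborFinset u, x w ≤ ∑ w ∈ G.neighborFinset v, x w + ∑ w ∈ A, x w := by
  classical
  have sum_union_le (s t : Finset V) : ∑ w ∈ s ∪ t, x w ≤ ∑ w ∈ s, x w + ∑ w ∈ t, x w := by
    rw [← Finset.sum_union_inter]
    exact le_add_of_nonneg_right (Finset.sum_nonneg fun w _ ↦ hnonneg w)
  have mem_of_ne {w : V} (huw : G.Adj u w) (hwv : w ≠ v) : G.Adj v w ∨ w ∈ A := by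
    simpa [hwv] using hN huw
  by_cases huv : G.Adj u v
  · -- The neighbour `v` of `u` is traded for the neighbour `u` of `v`, which weighs no less.
    have hsub : (G.neighborFinset u).erase v ⊆ (G.neighborFinset v).erase u ∪ A := by
      intro w hw
      simp only [Finset.mem_erase, SimpleGraph.mem_neighborFinset] at hw
      simpa [hw.2.ne'] using mem_of_ne hw.2 hw.1
    calc ∑ w ∈ G.neighborFinset u, x w
        = x v + ∑ w ∈ (G.neighborFinset u).erase v, x w := by
          rw [Finset.add_sum_erase _ _ (by simpa using huv)]
      _ ≤ x u + ∑ w ∈ (G.neighborFinset v).erase u ∪ A, x w :=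
          add_le_add hvu (Finset.sum_le_sum_of_subset_of_nonneg hsub fun w _ _ ↦ hnonneg w)
      _ ≤ x u + (∑ w ∈ (G.neighborFinset v).erase u, x w + ∑ w ∈ A, x w) := by
          gcongr
          exact sum_union_le _ _
      _ = ∑ w ∈ G.neighborFinset v, x w + ∑ w ∈ A, x w := by
          rw [← add_assoc, Finset.add_sum_erase _ _ (by simpa using huv.symm)]
  · have hsub : G.neighborFinset u ⊆ G.neighborFinset v ∪ A := by
      intro w hw
      rw [SimpleGraph.mem_neighborFinset] at hw
      simpa using mem_of_ne hw (by rintro rfl; exact huv hw)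
    exact (Finset.sum_le_sum_of_subset_of_nonneg hsub fun w _ _ ↦ hnonneg w).trans
      (sum_union_le _ _)

lemma lt_of_degree_lt_of_neighborSet_subset (hpos : ∀ w, 0 < x w)
    (hx : signlessLaplacian G *ᵥ x = q • x) (hdeg : G.degree u < G.degree v)
    (hN : G.neighborSet u ⊆ insert v (G.neighborSet v ∪ A))
    (hA : ∑ w ∈ A, x w < max (x u) (x v)) : x u < x v := by
  by_contra! hvu
  rw [max_eq_left hvu] at hA
  have hdeg' : (G.degree u : ℝ) + 1 ≤ G.degree v := mod_cast hdeg
  have hq := degree_le_of_signlessLaplacian_mulVec_eq hpos hx v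
  apply lt_irrefl ((q - G.degree u) * x u)
  calc (q - G.degree u) * x u
      = ∑ w ∈ G.neighborFinset u, x w := sub_degree_mul_eq_sum_neighborFinset hx u
    _ ≤ ∑ w ∈ G.neighborFinset v, x w + ∑ w ∈ A, x w :=
        sum_neighborFinset_le_add_sum (fun w ↦ (hpos w).le) hvu hN
    _ < (q - G.degree v) * x v + x u := by
        rw [sub_degree_mul_eq_sum_neighborFinset hx v]
        gcongr
    _ ≤ (q - G.degree v) * x u + x u := by
        gcongr
    _ = (q - G.degree v + 1) * x u := by ring
    _ ≤ (q - G.degree u) * x u := mul_le_mul_of_nonneg_right (by linarith) (hpos u).le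

end Eigenvector

lemma ncard_setOf_le_and_ne {n m : ℕ} (k : Fin n) (hk : m ≤ k.val) :
    {u : Fin n | m ≤ u.val ∧ u ≠ k}.ncard = n - (m + 1) := by
  have hm : m < n := hk.trans_lt k.isLt
  have hset : {u : Fin n | m ≤ u.val ∧ u ≠ k} =
      ((Finset.Ici ⟨m, hm⟩).erase k : Finset (Fin n)) := by
    ext u
    simp [Fin.le_def, and_comm]
  rw [hset, Set.ncard_coe_finset, Finset.card_erase_of_mem (by simpa [Fin.le_def] using hk),
    Fin.card_Ici, Nat.sub_sub]

theorem stmt_8_general {V : Type*} [Fintype V] (G : SimpleGraph V) {v₀ v₁ v₂ vₖ : V}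
    (h01 : G.neighborSet v₀ ⊆ insert v₁ (G.neighborSet v₁))
    (h1k : G.neighborSet v₁ ⊆ {v₀, vₖ} ∪ G.neighborSet vₖ)
    (h2k : G.neighborSet v₂ ⊆ {v₁, vₖ} ∪ G.neighborSet vₖ)
    (hd01 : (G.neighborSet v₀).ncard < (G.neighborSet v₁).ncard)
    (hd1k : (G.neighborSet v₁).ncard < (G.neighborSet vₖ).ncard)
    (hd2k : (G.neighborSet v₂).ncard < (G.neighborSet vₖ).ncard)
    {x : V → ℝ} {q : ℝ} (hpos : ∀ v, 0 < x v) (heig : signlessLaplacian G *ᵥ x = q • x) :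
    x v₂ < x vₖ := by
  classical
  have ncard_eq (v : V) : (G.neighborSet v).ncard = G.degree v := Set.ncard_eq_toFinset_card' _
  rw [ncard_eq, ncard_eq] at hd01 hd1k hd2k
  have hx01 : x v₀ < x v₁ :=
    lt_of_degree_lt_of_neighborSet_subset (A := ∅) hpos heig hd01 (by simpa using h01)
      (by simp [hpos])
  have hx1k : x v₁ < x vₖ :=
    lt_of_degree_lt_of_neighborSet_subset (A := {v₀}) hpos heig hd1k
      (by simpa [Set.insert_union, Set.insert_comm] using h1k) (by simp [hx01])
  exact lt_of_degree_lt_of_neighborSet_subset (A := {v₁}) hpos heig hd2k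
    (by simpa [Set.insert_union, Set.insert_comm] using h2k) (by simp [hx1k])

/-- for the maximal outer-planar graph of type `D_1` with `Δ = n - 3`,
if `n ≥ 8` then the Perron eigenvector satisfies `x_k > x_2`. -/
theorem stmt_8 (n k : ℕ) (hn : 7 ≤ n) (hk1 : 4 ≤ k) (hk2 : k ≤ n - 3)
    (G : SimpleGraph (Fin n))
    (h0 : G.neighborSet ⟨0, by omega⟩ = {⟨1, by omega⟩, ⟨n - 1, by omega⟩})
    (h1 : G.neighborSet ⟨1, by omega⟩ =
      {⟨0, by omega⟩, ⟨2, by omega⟩, ⟨n - 1, by omega⟩})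
    (h2 : G.neighborSet ⟨2, by omega⟩ =
      {⟨1, by omega⟩, ⟨3, by omega⟩, ⟨k, by omega⟩, ⟨n - 1, by omega⟩})
    (hlast : G.neighborSet ⟨n - 1, by omega⟩ =
      {⟨0, by omega⟩, ⟨1, by omega⟩, ⟨2, by omega⟩, ⟨k, by omega⟩, ⟨n - 2, by omega⟩})
    (hk' : G.neighborSet ⟨k, by omega⟩ =
      {u : Fin n | 2 ≤ u.val ∧ u ≠ ⟨k, by omega⟩})
    (x : Fin n → ℝ) (hpos : ∀ i, 0 < x i)
    (heig : (signlessLaplacian G).mulVec x = qIndex G • x)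
    (hn8 : 8 ≤ n) :
    x ⟨2, by omega⟩ < x ⟨k, by omega⟩ := by
  have hd0 : (G.neighborSet ⟨0, by omega⟩).ncard = 2 := by
    rw [h0, Set.ncard_pair (by simp; omega)]
  have hd1 : (G.neighborSet ⟨1, by omega⟩).ncard = 3 := by
    rw [h1, Set.ncard_eq_three]
    exact ⟨_, _, _, by simp, by simp; omega, by simp; omega, rfl⟩
  have hd2 : (G.neighborSet ⟨2, by omega⟩).ncard ≤ 4 := by
    grind [Set.ncard_insert_le, Set.ncard_singleton]
  have hdk : (G.neighborSet ⟨k, by omega⟩).ncard = n - 3 := by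
    rw [hk', ncard_setOf_le_and_ne _ (show 2 ≤ k by omega)]
  exact stmt_8_general G (v₀ := ⟨0, by omega⟩) (v₁ := ⟨1, by omega⟩)
    (by grind) (by grind) (by grind) (by omega) (by omega) (by omega) hpos heig
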